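/- Let 0<s<1, 1≤p<∞ and m > 0. Let (M, d) be a connected compact metric space equipped with a finite Borel measure μ which is positive on every nonempty open set, and let (C_j)_{j∈J} be a finite family of open subsets of M covering M. Then there is a constant C (depending on s, p, m, M, μ and the cover) such that for every metric space (X, d_X) and every Borel measurable map u : M → X, ∫_M∫_M d_X(u(x),u(y))^p / d(x,y)^{m+sp} dμ(x) dμ(y) ≤ C Σ_{j∈J} ∫_{C_j}∫_{C_j} d_X(u(x),u(y))^p / d(x,y)^{m+sp} dμ(x) dμ(y). -/

import Mathlib

open MeasureTheory Set ENNReal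

/-!
If `δ` is a Lebesgue number of the cover, pairs of points at distance less than `δ` lie in a common
member of the cover, and the other pairs contribute at most `δ ^ (-q) ∬ d_X(u(x),u(y))^p`, so it
suffices to patch this unweighted energy. By the quasi-triangle inequality for `d_X ^ p`, averaged
over an intermediate point in `A ∩ B`, the energy between `A` and `B` is controlled by the energies
of `A` and of `B` as soon as `μ (A ∩ B) > 0`. Connectedness then allows absorbing the members of the
cover one after the other into a single set.

As `X` need not be separable, `(x, y) ↦ d_X(u(x),u(y))` is not obviously measurable for the product
σ-algebra. Tonelli's theorem is avoided: by Fatou's lemma `a ↦ ∫ d_X(a,u(y))^p dμ(y)` is lower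
semicontinuous on `X`, so its composition with `u` is measurable.
-/

/-- The energy `∬ d_X(u(x),u(y))^p dν(y) dμ(x)` between two measures, without singular weight. The
energy between two sets `A` and `B` is obtained from `μ.restrict A` and `μ.restrict B`. -/
noncomputable def crossEnergy {M X : Type*} [MeasurableSpace M] [PseudoEMetricSpace X] (p : ℝ)
    (u : M → X) (μ ν : Measure M) : ℝ≥0∞ :=
  ∫⁻ x, ∫⁻ y, edist (u x) (u y) ^ p ∂ν ∂μ

/-- The `p`-th power of the Gagliardo seminorm of `u`, with the weight exponent `m + s * p` replaced
by an arbitrary `q`. The seminorm over a set `A` is obtained from `μ.restrict A`. -/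
noncomputable def gagliardoEnergy {M X : Type*} [MeasurableSpace M] [PseudoEMetricSpace M]
    [PseudoEMetricSpace X] (p q : ℝ) (u : M → X) (μ : Measure M) : ℝ≥0∞ :=
  ∫⁻ x, ∫⁻ y, edist (u x) (u y) ^ p / edist x y ^ q ∂μ ∂μ

section OpenCover

variable {M ι : Type*}

theorem connectedSpace_induction_of_finite_openCover [TopologicalSpace M] [ConnectedSpace M]
    [Finite ι] {U : ι → Set M} (hU : ∀ i, IsOpen (U i)) (hcover : ⋃ i, U i = univ)
    {P : Set M → Prop} (single : ∀ i, P (U i))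
    (union : ∀ A i, IsOpen A → (A ∩ U i).Nonempty → P A → P (A ∪ U i)) : P univ := by
  have exists_mem (x : M) : ∃ i, x ∈ U i := mem_iUnion.1 (hcover ▸ mem_univ x)
  let Good (J : Set ι) : Prop := (⋃ i ∈ J, U i).Nonempty ∧ P (⋃ i ∈ J, U i)
  obtain ⟨x₀⟩ : Nonempty M := inferInstance
  obtain ⟨i₀, hi₀⟩ := exists_mem x₀
  have good_singleton : Good {i₀} := by simpa [Good] using ⟨⟨x₀, hi₀⟩, single i₀⟩
  obtain ⟨J, -, hJ⟩ := exists_maximal_ge_of_wellFoundedGT Good {i₀} good_singleton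
  set A := ⋃ i ∈ J, U i
  have isOpen_A : IsOpen A := isOpen_biUnion fun i _ ↦ hU i
  have subset_of_meets (i : ι) (hi : (A ∩ U i).Nonempty) : U i ⊆ A := by
    have union_eq : ⋃ j ∈ insert i J, U j = A ∪ U i := by rw [biUnion_insert, union_comm]
    have good_insert : Good (insert i J) := by
      simp only [Good, union_eq]
      exact ⟨hJ.prop.1.mono subset_union_left, union A i isOpen_A hi hJ.prop.2⟩
    exact subset_biUnion_of_mem (hJ.le_of_ge good_insert (subset_insert i J) (mem_insert i J))
  have isOpen_compl_A : IsOpen Aᶜ := isOpen_iff_mem_nhds.2 fun y hy ↦ by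
    obtain ⟨i, hi⟩ := exists_mem y
    filter_upwards [(hU i).mem_nhds hi] with z hz hzA
    exact hy (subset_of_meets i ⟨z, hzA, hz⟩ hi)
  have A_eq_univ : A = univ :=
    IsClopen.eq_univ ⟨isOpen_compl_iff.1 isOpen_compl_A, isOpen_A⟩ hJ.prop.1
  exact A_eq_univ ▸ hJ.prop.2

theorem isClosed_setOf_eball_subset [PseudoEMetricSpace M] (C : Set M) (δ : ℝ≥0∞) :
    IsClosed {x | Metric.eball x δ ⊆ C} := by
  have compl_eq : {x | Metric.eball x δ ⊆ C}ᶜ = ⋃ y ∈ Cᶜ, Metric.eball y δ := by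
    ext x
    simp [not_subset, Metric.mem_eball, edist_comm, and_comm]
  rw [← isOpen_compl_iff, compl_eq]
  exact isOpen_biUnion fun y _ ↦ Metric.isOpen_eball

end OpenCover

section CrossEnergy

variable {M X : Type*} [MeasurableSpace M] [PseudoEMetricSpace X] {p : ℝ} {u : M → X}
  {μ μ' μ₁ μ₂ ν ν' : Measure M}

theorem crossEnergy_mono (hμ : μ ≤ μ') (hν : ν ≤ ν') :
    crossEnergy p u μ ν ≤ crossEnergy p u μ' ν' :=
  lintegral_mono' hμ fun _ ↦ lintegral_mono' hν le_rfl

theorem crossEnergy_add_left :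
    crossEnergy p u (μ₁ + μ₂) ν = crossEnergy p u μ₁ ν + crossEnergy p u μ₂ ν :=
  lintegral_add_measure _ _ _

theorem edist_rpow_le_two_rpow_mul (hp : 0 ≤ p) (a b c : X) :
    edist a b ^ p ≤ 2 ^ p * (edist a c ^ p + edist b c ^ p) := by
  have edist_le : edist a b ≤ 2 * max (edist a c) (edist b c) :=
    (edist_triangle_right a b c).trans <| by
      rw [two_mul]
      exact add_le_add (le_max_left _ _) (le_max_right _ _)
  calc edist a b ^ p
      ≤ (2 * max (edist a c) (edist b c)) ^ p := ENNReal.rpow_le_rpow edist_le hp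
    _ = 2 ^ p * max (edist a c ^ p) (edist b c ^ p) := by
        rw [ENNReal.mul_rpow_of_nonneg _ _ hp, (ENNReal.monotone_rpow_of_nonneg hp).map_max]
    _ ≤ 2 ^ p * (edist a c ^ p + edist b c ^ p) := by
        gcongr
        exact max_le_add_of_nonneg zero_le zero_le

variable [MeasurableSpace X] [OpensMeasurableSpace X]

theorem measurable_edist_rpow (hu : Measurable u) (a : X) :
    Measurable fun y ↦ edist a (u y) ^ p :=
  ((continuous_const.edist continuous_id).measurable.comp hu).pow_const p

theorem lowerSemicontinuous_lintegral_edist_rpow (hu : Measurable u) :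
    LowerSemicontinuous fun a ↦ ∫⁻ y, edist a (u y) ^ p ∂ν := by
  refine lowerSemicontinuous_iff_le_liminf.2 fun a ↦ ?_
  have continuous_kernel (y : M) : Continuous fun b ↦ edist b (u y) ^ p :=
    ENNReal.continuous_rpow_const.comp (continuous_id.edist continuous_const)
  calc ∫⁻ y, edist a (u y) ^ p ∂ν
      = ∫⁻ y, Filter.liminf (fun b ↦ edist b (u y) ^ p) (nhds a) ∂ν :=
        lintegral_congr fun y ↦ ((continuous_kernel y).tendsto a).liminf_eq.symm
    _ ≤ Filter.liminf (fun b ↦ ∫⁻ y, edist b (u y) ^ p ∂ν) (nhds a) :=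
        lintegral_liminf_le fun b ↦ measurable_edist_rpow hu b

theorem measurable_lintegral_edist_rpow (hu : Measurable u) :
    Measurable fun x ↦ ∫⁻ y, edist (u x) (u y) ^ p ∂ν :=
  (lowerSemicontinuous_lintegral_edist_rpow hu).measurable.comp hu

theorem crossEnergy_add_right (hu : Measurable u) :
    crossEnergy p u μ (ν + ν') = crossEnergy p u μ ν + crossEnergy p u μ ν' := by
  simp only [crossEnergy, lintegral_add_measure]
  exact lintegral_add_left (measurable_lintegral_edist_rpow hu) _

theorem mul_edist_rpow_le (hp : 0 ≤ p) (hu : Measurable u) (a b : X) :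
    ν univ * edist a b ^ p ≤
      2 ^ p * (∫⁻ y, edist a (u y) ^ p ∂ν + ∫⁻ y, edist b (u y) ^ p ∂ν) := by
  calc ν univ * edist a b ^ p
      = ∫⁻ _, edist a b ^ p ∂ν := by rw [lintegral_const, mul_comm]
    _ ≤ ∫⁻ y, 2 ^ p * (edist a (u y) ^ p + edist b (u y) ^ p) ∂ν :=
        lintegral_mono fun y ↦ edist_rpow_le_two_rpow_mul hp a b (u y)
    _ = 2 ^ p * (∫⁻ y, edist a (u y) ^ p ∂ν + ∫⁻ y, edist b (u y) ^ p ∂ν) := by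
        rw [lintegral_const_mul' _ _ (ENNReal.rpow_ne_top_of_nonneg hp ofNat_ne_top),
          lintegral_add_left (measurable_edist_rpow hu a)]

theorem mul_crossEnergy_le (hp : 0 ≤ p) (hu : Measurable u) :
    ν univ * crossEnergy p u μ₁ μ₂ ≤
      2 ^ p * (μ₂ univ * crossEnergy p u μ₁ ν + μ₁ univ * crossEnergy p u μ₂ ν) := by
  let F (x : M) : ℝ≥0∞ := ∫⁻ y, edist (u x) (u y) ^ p ∂ν
  have hF : Measurable F := measurable_lintegral_edist_rpow hu
  have two_rpow_ne_top : (2 : ℝ≥0∞) ^ p ≠ ∞ := ENNReal.rpow_ne_top_of_nonneg hp ofNat_ne_top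
  calc ν univ * crossEnergy p u μ₁ μ₂
      = ∫⁻ x, ∫⁻ z, ν univ * edist (u x) (u z) ^ p ∂μ₂ ∂μ₁ := by
        simp only [crossEnergy, lintegral_const_mul _ (measurable_edist_rpow hu _),
          lintegral_const_mul _ (measurable_lintegral_edist_rpow hu)]
    _ ≤ ∫⁻ x, ∫⁻ z, 2 ^ p * (F x + F z) ∂μ₂ ∂μ₁ :=
        lintegral_mono fun x ↦ lintegral_mono fun z ↦ mul_edist_rpow_le hp hu (u x) (u z)
    _ = 2 ^ p * ∫⁻ x, (F x * μ₂ univ + ∫⁻ z, F z ∂μ₂) ∂μ₁ := by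
        simp only [lintegral_const_mul' _ _ two_rpow_ne_top, lintegral_add_left measurable_const,
          lintegral_const]
    _ = 2 ^ p * (μ₂ univ * crossEnergy p u μ₁ ν + μ₁ univ * crossEnergy p u μ₂ ν) := by
        rw [lintegral_add_left (hF.mul_const _), lintegral_mul_const _ hF, lintegral_const,
          mul_comm (μ₂ univ), mul_comm (μ₁ univ)]
        rfl

theorem crossEnergy_le_of_le_of_le (hp : 0 ≤ p) (hu : Measurable u) [IsFiniteMeasure ν]
    (hν : ν ≠ 0) (hν₁ : ν ≤ μ₁) (hν₂ : ν ≤ μ₂) :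
    crossEnergy p u μ₁ μ₂ ≤ 2 ^ p * (μ₁ univ + μ₂ univ) / ν univ *
      (crossEnergy p u μ₁ μ₁ + crossEnergy p u μ₂ μ₂) := by
  rw [← ENNReal.mul_div_right_comm, ENNReal.le_div_iff_mul_le
    (.inl (Measure.measure_univ_ne_zero.2 hν)) (.inl (measure_ne_top ν univ)), mul_comm]
  calc ν univ * crossEnergy p u μ₁ μ₂
      ≤ 2 ^ p * (μ₂ univ * crossEnergy p u μ₁ ν + μ₁ univ * crossEnergy p u μ₂ ν) :=
        mul_crossEnergy_le hp hu
    _ ≤ 2 ^ p * ((μ₁ univ + μ₂ univ) * crossEnergy p u μ₁ μ₁ +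
          (μ₁ univ + μ₂ univ) * crossEnergy p u μ₂ μ₂) := by
        gcongr
        exacts [le_add_self, crossEnergy_mono le_rfl hν₁, le_self_add, crossEnergy_mono le_rfl hν₂]
    _ = 2 ^ p * (μ₁ univ + μ₂ univ) * (crossEnergy p u μ₁ μ₁ + crossEnergy p u μ₂ μ₂) := by ring

theorem crossEnergy_add_self_le (hp : 0 ≤ p) (hu : Measurable u) [IsFiniteMeasure ν]
    (hν : ν ≠ 0) (hν₁ : ν ≤ μ₁) (hν₂ : ν ≤ μ₂) :
    crossEnergy p u (μ₁ + μ₂) (μ₁ + μ₂) ≤ (1 + 2 * (2 ^ p * (μ₁ univ + μ₂ univ) / ν univ)) *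
      (crossEnergy p u μ₁ μ₁ + crossEnergy p u μ₂ μ₂) := by
  have h₁₂ := crossEnergy_le_of_le_of_le hp hu hν hν₁ hν₂
  have h₂₁ := crossEnergy_le_of_le_of_le hp hu hν hν₂ hν₁
  rw [add_comm (μ₂ univ), add_comm (crossEnergy p u μ₂ μ₂)] at h₂₁
  set L := 2 ^ p * (μ₁ univ + μ₂ univ) / ν univ
  set S := crossEnergy p u μ₁ μ₁ + crossEnergy p u μ₂ μ₂ with hS
  calc crossEnergy p u (μ₁ + μ₂) (μ₁ + μ₂)
      = S + (crossEnergy p u μ₁ μ₂ + crossEnergy p u μ₂ μ₁) := by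
        rw [crossEnergy_add_left, crossEnergy_add_right hu, crossEnergy_add_right hu, hS]
        ring
    _ ≤ S + (L * S + L * S) := by gcongr
    _ = (1 + 2 * L) * S := by ring

theorem exists_crossEnergy_le_sum {ι : Type*} [TopologicalSpace M] [ConnectedSpace M]
    (μ : Measure M) [IsFiniteMeasure μ] [μ.IsOpenPosMeasure] [Fintype ι] {U : ι → Set M}
    (hU : ∀ i, IsOpen (U i)) (hcover : ⋃ i, U i = univ) (hp : 0 ≤ p) :
    ∃ C : ℝ≥0∞, C ≠ ∞ ∧ ∀ (X : Type*) [PseudoEMetricSpace X] [MeasurableSpace X]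
      [OpensMeasurableSpace X] (u : M → X), Measurable u →
        crossEnergy p u μ μ ≤
          C * ∑ i, crossEnergy p u (μ.restrict (U i)) (μ.restrict (U i)) := by
  let P (A : Set M) : Prop := ∃ C : ℝ≥0∞, C ≠ ∞ ∧ ∀ (X : Type _) [PseudoEMetricSpace X]
    [MeasurableSpace X] [OpensMeasurableSpace X] (u : M → X), Measurable u →
      crossEnergy p u (μ.restrict A) (μ.restrict A) ≤
        C * ∑ i, crossEnergy p u (μ.restrict (U i)) (μ.restrict (U i))
  have le_sum (X : Type _) [PseudoEMetricSpace X] (u : M → X) (i : ι) :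
      crossEnergy p u (μ.restrict (U i)) (μ.restrict (U i)) ≤
        ∑ j, crossEnergy p u (μ.restrict (U j)) (μ.restrict (U j)) :=
    Finset.single_le_sum_of_canonicallyOrdered
      (f := fun j ↦ crossEnergy p u (μ.restrict (U j)) (μ.restrict (U j))) (Finset.mem_univ i)
  suffices P univ by simpa only [P, Measure.restrict_univ] using this
  refine connectedSpace_induction_of_finite_openCover hU hcover ?single ?union
  case single => exact fun i ↦ ⟨1, one_ne_top, fun X _ _ _ u _ ↦ by simpa using le_sum X u i⟩
  case union =>
    rintro A i hA hAi ⟨C, hC, hCA⟩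
    have inter_ne_zero : μ (A ∩ U i) ≠ 0 := (hA.inter (hU i)).measure_ne_zero μ hAi
    have restrict_ne_zero : μ.restrict (A ∩ U i) ≠ 0 := by rwa [Ne, Measure.restrict_eq_zero]
    set L := 2 ^ p * (μ A + μ (U i)) / μ (A ∩ U i)
    have hL_top : L ≠ ∞ := ENNReal.div_ne_top
      (mul_ne_top (ENNReal.rpow_ne_top_of_nonneg hp ofNat_ne_top) (by finiteness)) inter_ne_zero
    refine ⟨(1 + 2 * L) * (C + 1), by finiteness, fun X _ _ _ u hu ↦ ?_⟩
    set T := ∑ j, crossEnergy p u (μ.restrict (U j)) (μ.restrict (U j))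
    calc crossEnergy p u (μ.restrict (A ∪ U i)) (μ.restrict (A ∪ U i))
        ≤ crossEnergy p u (μ.restrict A + μ.restrict (U i)) (μ.restrict A + μ.restrict (U i)) :=
          crossEnergy_mono (Measure.restrict_union_le _ _) (Measure.restrict_union_le _ _)
      _ ≤ (1 + 2 * L) * (crossEnergy p u (μ.restrict A) (μ.restrict A) +
            crossEnergy p u (μ.restrict (U i)) (μ.restrict (U i))) := by
          simpa only [Measure.restrict_apply_univ] using
            crossEnergy_add_self_le hp hu restrict_ne_zero
              (Measure.restrict_mono_set μ inter_subset_left)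
              (Measure.restrict_mono_set μ inter_subset_right)
      _ ≤ (1 + 2 * L) * (C * T + T) := by
          gcongr
          exacts [hCA X u hu, le_sum X u i]
      _ = (1 + 2 * L) * (C + 1) * T := by ring

end CrossEnergy

section GagliardoEnergy

variable {M X : Type*} [MeasurableSpace M] [PseudoEMetricSpace M] [PseudoEMetricSpace X] {p q : ℝ}
  {u : M → X} {μ : Measure M}

theorem crossEnergy_le_mul_gagliardoEnergy (hq : 0 ≤ q) {R : ℝ≥0∞} (hR₀ : R ≠ 0) (hR : R ≠ ∞)
    (hdist : ∀ x y : M, edist x y ≤ R) :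
    crossEnergy p u μ μ ≤ R ^ q * gagliardoEnergy p q u μ := by
  have hRq₀ : R ^ q ≠ 0 := by simp [ENNReal.rpow_eq_zero_iff, hR₀, hR]
  have hRq : R ^ q ≠ ∞ := ENNReal.rpow_ne_top_of_nonneg hq hR
  simp only [crossEnergy, gagliardoEnergy, ← lintegral_const_mul' _ _ hRq]
  refine lintegral_mono fun x ↦ lintegral_mono fun y ↦ ?_
  calc edist (u x) (u y) ^ p
      = R ^ q * (edist (u x) (u y) ^ p / R ^ q) := (ENNReal.mul_div_cancel hRq₀ hRq).symm
    _ ≤ R ^ q * (edist (u x) (u y) ^ p / edist x y ^ q) := by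
        gcongr
        exact hdist x y

variable [MeasurableSpace X] [OpensMeasurableSpace X]

theorem lintegral_edist_rpow_div_le (hq : 0 ≤ q) (hu : Measurable u) {C : Set M} {δ : ℝ≥0∞} {x : M}
    (hx : Metric.eball x δ ⊆ C) :
    ∫⁻ y, edist (u x) (u y) ^ p / edist x y ^ q ∂μ ≤
      ∫⁻ y in C, edist (u x) (u y) ^ p / edist x y ^ q ∂μ +
        (δ ^ q)⁻¹ * ∫⁻ y, edist (u x) (u y) ^ p ∂μ := by
  have hmeas : Measurable fun y ↦ (δ ^ q)⁻¹ * edist (u x) (u y) ^ p :=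
    (measurable_edist_rpow hu (u x)).const_mul _
  have far : ∫⁻ y in Cᶜ, edist (u x) (u y) ^ p / edist x y ^ q ∂μ ≤
      (δ ^ q)⁻¹ * ∫⁻ y, edist (u x) (u y) ^ p ∂μ :=
    calc ∫⁻ y in Cᶜ, edist (u x) (u y) ^ p / edist x y ^ q ∂μ
        ≤ ∫⁻ y in Cᶜ, (δ ^ q)⁻¹ * edist (u x) (u y) ^ p ∂μ := by
          refine setLIntegral_mono hmeas fun y hy ↦ ?_
          have le_edist : δ ≤ edist x y := by
            rw [edist_comm]
            exact not_lt.1 fun h ↦ hy (hx h)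
          rw [ENNReal.div_eq_inv_mul]
          gcongr
      _ ≤ ∫⁻ y, (δ ^ q)⁻¹ * edist (u x) (u y) ^ p ∂μ := setLIntegral_le_lintegral _ _
      _ = (δ ^ q)⁻¹ * ∫⁻ y, edist (u x) (u y) ^ p ∂μ :=
          lintegral_const_mul _ (measurable_edist_rpow hu (u x))
  calc ∫⁻ y, edist (u x) (u y) ^ p / edist x y ^ q ∂μ
      = ∫⁻ y in C ∪ Cᶜ, edist (u x) (u y) ^ p / edist x y ^ q ∂μ := by
        rw [union_compl_self, setLIntegral_univ]
    _ ≤ ∫⁻ y in C, edist (u x) (u y) ^ p / edist x y ^ q ∂μ +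
          ∫⁻ y in Cᶜ, edist (u x) (u y) ^ p / edist x y ^ q ∂μ := lintegral_union_le _ _ _
    _ ≤ ∫⁻ y in C, edist (u x) (u y) ^ p / edist x y ^ q ∂μ +
          (δ ^ q)⁻¹ * ∫⁻ y, edist (u x) (u y) ^ p ∂μ := by gcongr

theorem gagliardoEnergy_le_sum_add_crossEnergy [OpensMeasurableSpace M] {ι : Type*} [Fintype ι]
    (hq : 0 ≤ q) (hu : Measurable u) {U : ι → Set M} {δ : ℝ≥0∞} (hδ : 0 < δ)
    (hleb : ∀ x, ∃ i, Metric.eball x δ ⊆ U i) :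
    gagliardoEnergy p q u μ ≤ ∑ i, gagliardoEnergy p q u (μ.restrict (U i)) +
      Fintype.card ι * ((δ ^ q)⁻¹ * crossEnergy p u μ μ) := by
  let A (i : ι) : Set M := {x | Metric.eball x δ ⊆ U i}
  have hA (i : ι) : MeasurableSet (A i) := (isClosed_setOf_eball_subset (U i) δ).measurableSet
  have A_subset (i : ι) : A i ⊆ U i := fun x hx ↦ hx (Metric.mem_eball_self hδ)
  have iUnion_A : ⋃ i, A i = univ := iUnion_eq_univ_iff.2 hleb
  let G (B : Set M) (x : M) : ℝ≥0∞ := ∫⁻ y in B, edist (u x) (u y) ^ p / edist x y ^ q ∂μ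
  let F (x : M) : ℝ≥0∞ := (δ ^ q)⁻¹ * ∫⁻ y, edist (u x) (u y) ^ p ∂μ
  have hF : Measurable F := (measurable_lintegral_edist_rpow hu).const_mul _
  have lintegral_F : ∫⁻ x, F x ∂μ = (δ ^ q)⁻¹ * crossEnergy p u μ μ :=
    lintegral_const_mul _ (measurable_lintegral_edist_rpow hu)
  have piece (i : ι) : ∫⁻ x in A i, G univ x ∂μ ≤
      gagliardoEnergy p q u (μ.restrict (U i)) + (δ ^ q)⁻¹ * crossEnergy p u μ μ :=
    calc ∫⁻ x in A i, G univ x ∂μ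
        ≤ ∫⁻ x in A i, (G (U i) x + F x) ∂μ := setLIntegral_mono' (hA i) fun x hx ↦ by
          simpa only [G, setLIntegral_univ] using lintegral_edist_rpow_div_le hq hu hx
      _ = ∫⁻ x in A i, G (U i) x ∂μ + ∫⁻ x in A i, F x ∂μ := lintegral_add_right _ hF
      _ ≤ ∫⁻ x in U i, G (U i) x ∂μ + ∫⁻ x, F x ∂μ :=
          add_le_add (lintegral_mono_set (A_subset i)) (setLIntegral_le_lintegral _ _)
      _ = gagliardoEnergy p q u (μ.restrict (U i)) + (δ ^ q)⁻¹ * crossEnergy p u μ μ := by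
          rw [lintegral_F]
          rfl
  calc gagliardoEnergy p q u μ
      = ∫⁻ x in ⋃ i, A i, G univ x ∂μ := by
        simp only [iUnion_A, G, setLIntegral_univ, gagliardoEnergy]
    _ ≤ ∑ i, ∫⁻ x in A i, G univ x ∂μ := by
        simpa only [tsum_fintype] using lintegral_iUnion_le A (G univ)
    _ ≤ ∑ i, (gagliardoEnergy p q u (μ.restrict (U i)) + (δ ^ q)⁻¹ * crossEnergy p u μ μ) :=
        Finset.sum_le_sum fun i _ ↦ piece i
    _ = ∑ i, gagliardoEnergy p q u (μ.restrict (U i)) +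
          Fintype.card ι * ((δ ^ q)⁻¹ * crossEnergy p u μ μ) := by simp [Finset.sum_add_distrib]

end GagliardoEnergy

theorem seminorm_patching_inequality_general {M ι : Type*} [PseudoMetricSpace M] [CompactSpace M]
    [ConnectedSpace M] [MeasurableSpace M] [OpensMeasurableSpace M] (μ : Measure M)
    [IsFiniteMeasure μ] [μ.IsOpenPosMeasure] [Fintype ι] {U : ι → Set M}
    (hU : ∀ i, IsOpen (U i)) (hcover : ⋃ i, U i = univ) {p q : ℝ} (hp : 0 ≤ p) (hq : 0 ≤ q) :
    ∃ C : ℝ, 0 < C ∧ ∀ (X : Type*) [PseudoEMetricSpace X] [MeasurableSpace X]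
      [OpensMeasurableSpace X] (u : M → X), Measurable u →
        gagliardoEnergy p q u μ ≤
          ENNReal.ofReal C * ∑ i, gagliardoEnergy p q u (μ.restrict (U i)) := by
  obtain ⟨C, hC, patch⟩ := exists_crossEnergy_le_sum μ hU hcover hp
  obtain ⟨δ, hδ, hleb⟩ := lebesgue_number_lemma_of_emetric isCompact_univ hU hcover.ge
  set R : ℝ≥0∞ := Metric.ediam (univ : Set M) + 1 with hR_def
  have hR : R ≠ ∞ := add_ne_top.2 ⟨isCompact_univ.isBounded.ediam_ne_top, one_ne_top⟩
  have edist_le_R (x y : M) : edist x y ≤ R :=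
    (Metric.edist_le_ediam_of_mem (mem_univ x) (mem_univ y)).trans le_self_add
  have hRq : R ^ q ≠ ∞ := ENNReal.rpow_ne_top_of_nonneg hq hR
  have hδq : (δ ^ q)⁻¹ ≠ ∞ := ENNReal.inv_ne_top.2 (ENNReal.rpow_pos_of_nonneg hδ hq).ne'
  set B : ℝ≥0∞ := 1 + Fintype.card ι * ((δ ^ q)⁻¹ * (C * R ^ q))
  have hB : B ≠ ∞ := by finiteness
  refine ⟨B.toReal, toReal_pos (by simp [B]) hB, fun X _ _ _ u hu ↦ ?_⟩
  rw [ofReal_toReal hB]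
  set T := ∑ i, gagliardoEnergy p q u (μ.restrict (U i))
  have crossEnergy_le : crossEnergy p u μ μ ≤ C * (R ^ q * T) := by
    refine (patch X u hu).trans ?_
    rw [Finset.mul_sum (a := R ^ q)]
    gcongr
    exact crossEnergy_le_mul_gagliardoEnergy hq (by simp [hR_def]) hR edist_le_R
  calc gagliardoEnergy p q u μ
      ≤ T + Fintype.card ι * ((δ ^ q)⁻¹ * crossEnergy p u μ μ) :=
        gagliardoEnergy_le_sum_add_crossEnergy hq hu hδ fun x ↦ hleb x (mem_univ x)
    _ ≤ T + Fintype.card ι * ((δ ^ q)⁻¹ * (C * (R ^ q * T))) := by gcongr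
    _ = B * T := by ring

/-- **Seminorm patching inequality.** Let `0 < s < 1`, `1 ≤ p < ∞`, `m > 0`. Let `M` be a
connected compact metric space with a finite Borel measure `μ` positive on nonempty open
sets, and let `(C_j)` be a finite open cover of `M`. Then there is a constant `C` such that
for every metric space `X` and every Borel measurable `u : M → X`,
`|u|_{W^{s,p}(M)}^p ≤ C ∑_j |u|_{W^{s,p}(C_j)}^p`, where
`|u|_{W^{s,p}(A)}^p := ∫_A∫_A d_X(u(x),u(y))^p/d(x,y)^{m+sp} dμ dμ`. -/
theorem seminorm_patching_inequality (s p m : ℝ) (hs0 : 0 < s) (hs1 : s < 1) (hp1 : 1 ≤ p)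
    (hm : 0 < m) (M : Type*) [MetricSpace M] [CompactSpace M] [ConnectedSpace M]
    [MeasurableSpace M] [BorelSpace M] (μ : Measure M) [IsFiniteMeasure μ]
    (hμ : ∀ U : Set M, IsOpen U → U.Nonempty → 0 < μ U)
    (ι : Type*) [Fintype ι] (Cov : ι → Set M) (hCopen : ∀ j, IsOpen (Cov j))
    (hCcover : univ ⊆ ⋃ j, Cov j) :
    ∃ C : ℝ, 0 < C ∧
      ∀ (X : Type*) [MetricSpace X] [MeasurableSpace X] [BorelSpace X] (u : M → X),
        Measurable u →
        (∫⁻ x, ∫⁻ y, edist (u x) (u y) ^ p / edist x y ^ (m + s * p) ∂μ ∂μ) ≤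
          ENNReal.ofReal C *
            ∑ j : ι, ∫⁻ x in Cov j, ∫⁻ y in Cov j,
              edist (u x) (u y) ^ p / edist x y ^ (m + s * p) ∂μ ∂μ := by
  have : μ.IsOpenPosMeasure := ⟨fun V hV hne ↦ (hμ V hV hne).ne'⟩
  obtain ⟨C, hC, patch⟩ := seminorm_patching_inequality_general μ hCopen
    (univ_subset_iff.1 hCcover) (zero_le_one.trans hp1) (q := m + s * p) (by positivity)
  exact ⟨C, hC, fun X _ _ _ u hu ↦ patch X u hu⟩
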